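/- Let CS be a constant specification and Γ ⊆ Form^Ag. Then the following are equivalent: (i) Γ is CS-consistent; (ii) Γ is satisfiable in Mod_CS(𝓣^Ag_mixsucc), the class of CS-normal jstit models based on mixed successor temporal frames for Ag; (iii) Γ is satisfiable in Mod↓_CS(𝓣^Ag_mixsucc), the subclass of unirelational such models. -/

import Mathlib

/-! Preliminaries: temporal frames, stit frames, jstit frames, the language of
JA-STIT, jstit models, satisfaction, and the Hilbert system Σ_D(CS). -/

/-- A temporal frame: a nonempty set of moments with a partial order satisfying
historical connection and no backward branching. -/
structure TemporalFrame (Mo : Type) : Type where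
  le : Mo → Mo → Prop
  le_refl : ∀ m, le m m
  le_antisymm : ∀ {m m'}, le m m' → le m' m → m = m'
  le_trans : ∀ {m1 m2 m3}, le m1 m2 → le m2 m3 → le m1 m3
  nonempty : Nonempty Mo
  hist_conn : ∀ m m1, ∃ m2, le m2 m ∧ le m2 m1
  no_backward : ∀ m m1 m2, le m1 m → le m2 m → le m1 m2 ∨ le m2 m1

namespace TemporalFrame

variable {Mo : Type} (T : TemporalFrame Mo)

/-- The strict companion of the temporal order. -/
def lt (m m' : Mo) : Prop := T.le m m' ∧ m ≠ m'

/-- A history is a maximal chain of moments w.r.t. the temporal order. -/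
def IsHistory (h : Set Mo) : Prop :=
  IsChain T.le h ∧ ∀ h' : Set Mo, IsChain T.le h' → h ⊆ h' → h' = h

/-- `T.H m` is the set of histories passing through the moment `m`. -/
def H (m : Mo) : Set (Set Mo) := { h | T.IsHistory h ∧ m ∈ h }

/-- Histories `h` and `g` are undivided at `m`. -/
def Undiv (m : Mo) (h g : Set Mo) : Prop := ∃ m', T.lt m m' ∧ m' ∈ h ∧ m' ∈ g

/-- `m'` is an immediate successor of `m`. -/
def Next (m m' : Mo) : Prop := T.lt m m' ∧ ∀ m'', T.lt m'' m' → T.le m'' m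

/-- Mixed successor condition on (the temporal part of) a frame. -/
def MixSucc : Prop :=
  ∀ m m1 : Mo,
    (T.lt m m1 → ∃ m2, T.le m2 m1 ∧ T.Next m m2) ∨
    (∀ h ∈ T.H m, ∀ g ∈ T.H m, T.Undiv m h g)

end TemporalFrame

/-- A stit frame for an agent community `Ag`: a temporal frame together with a choice
function assigning to each moment and agent a partition of the histories through that
moment, subject to no choice between undivided histories and independence of agents. -/
structure StitFrame (Mo : Type) (Ag : Type) extends TemporalFrame Mo where
  choice : Mo → Ag → Set (Set (Set Mo))
  choice_cell_nonempty : ∀ m j C, C ∈ choice m j → C.Nonempty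
  choice_cell_sub : ∀ m j C, C ∈ choice m j → C ⊆ toTemporalFrame.H m
  choice_cover : ∀ m j h, h ∈ toTemporalFrame.H m → ∃ C ∈ choice m j, h ∈ C
  choice_disjoint : ∀ m j C C', C ∈ choice m j → C' ∈ choice m j →
    (C ∩ C').Nonempty → C = C'
  no_choice_undiv : ∀ m j h h', h ∈ toTemporalFrame.H m → h' ∈ toTemporalFrame.H m →
    toTemporalFrame.Undiv m h h' → ∀ C ∈ choice m j, h ∈ C → h' ∈ C
  independence : ∀ m (f : Ag → Set (Set Mo)), (∀ j, f j ∈ choice m j) →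
    (⋂ j, f j).Nonempty

/-- A justification stit (jstit) frame for `Ag`: a stit frame together with two
epistemic preorders `R ⊆ R_e`, with the temporal order included in `R`. -/
structure JstitFrame (Mo : Type) (Ag : Type) extends StitFrame Mo Ag where
  R : Mo → Mo → Prop
  Re : Mo → Mo → Prop
  R_refl : ∀ m, R m m
  R_trans : ∀ {m1 m2 m3}, R m1 m2 → R m2 m3 → R m1 m3
  Re_refl : ∀ m, Re m m
  Re_trans : ∀ {m1 m2 m3}, Re m1 m2 → Re m2 m3 → Re m1 m3
  R_sub_Re : ∀ {m m'}, R m m' → Re m m'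
  le_sub_R : ∀ {m m'}, le m m' → R m m'

namespace JstitFrame

variable {Mo : Type} {Ag : Type} (F : JstitFrame Mo Ag)

/-- The family `Θ_m` of subsets of the set of moments associated with a moment `m`. -/
def Theta (m : Mo) : Set (Set Mo) :=
  { S | m ∈ S ∧
    (∀ m1 m2, m1 ∈ S → F.Re m1 m2 → m2 ∈ S) ∧
    (∀ m1, (∀ h ∈ F.toTemporalFrame.H m1,
        ∃ m2 ∈ h, F.toTemporalFrame.Next m1 m2 ∧ m2 ∈ S) → m1 ∈ S) ∧
    (∀ m1, m1 ∈ S →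
      (∀ m2, F.toTemporalFrame.lt m2 m1 →
        ∃ m3, F.toTemporalFrame.lt m2 m3 ∧ F.toTemporalFrame.lt m3 m1) →
      ∃ m4, F.toTemporalFrame.lt m4 m1 ∧ m4 ∈ S) }

/-- A jstit frame is unirelational iff `R_e ⊆ R`. -/
def Unirelational : Prop := ∀ m m', F.Re m m' → F.R m m'

/-- Regularity of a jstit frame. -/
def Regular : Prop :=
  ∀ m m1 : Mo, F.toTemporalFrame.lt m m1 →
    (∃ S : Set Mo,
      (∀ m0, F.toTemporalFrame.lt m m0 → F.le m0 m1 → S ∈ F.Theta m0) ∧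
      m ∉ S ∧
      ∃ h' ∈ F.toTemporalFrame.H m,
        (∀ g ∈ F.toTemporalFrame.H m1, ¬ F.toTemporalFrame.Undiv m h' g) ∧
        (∀ m' ∈ h', F.toTemporalFrame.Next m m' → m' ∉ S)) →
    ∃ m2, F.le m2 m1 ∧ F.toTemporalFrame.Next m m2

end JstitFrame

/-- Proof polynomials over proof variables `PVar` and proof constants `PConst`. -/
inductive Pol (PVar PConst : Type) : Type
  | var : PVar → Pol PVar PConst
  | const : PConst → Pol PVar PConst
  | plus : Pol PVar PConst → Pol PVar PConst → Pol PVar PConst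
  | times : Pol PVar PConst → Pol PVar PConst → Pol PVar PConst
  | bang : Pol PVar PConst → Pol PVar PConst

/-- Formulas of JA-STIT. -/
inductive Form (Ag PVar PConst PropVar : Type) : Type
  | pv : PropVar → Form Ag PVar PConst PropVar
  | and : Form Ag PVar PConst PropVar → Form Ag PVar PConst PropVar →
      Form Ag PVar PConst PropVar
  | neg : Form Ag PVar PConst PropVar → Form Ag PVar PConst PropVar
  | stit : Ag → Form Ag PVar PConst PropVar → Form Ag PVar PConst PropVar
  | box : Form Ag PVar PConst PropVar → Form Ag PVar PConst PropVar
  | proves : Pol PVar PConst → Form Ag PVar PConst PropVar → Form Ag PVar PConst PropVar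
  | know : Form Ag PVar PConst PropVar → Form Ag PVar PConst PropVar
  | ann : Pol PVar PConst → Form Ag PVar PConst PropVar

namespace Form

variable {Ag PVar PConst PropVar : Type}

/-- Implication, defined as usual from `¬` and `∧`. -/
def imp (A B : Form Ag PVar PConst PropVar) : Form Ag PVar PConst PropVar :=
  neg (and A (neg B))

/-- Disjunction, defined as usual. -/
def or (A B : Form Ag PVar PConst PropVar) : Form Ag PVar PConst PropVar :=
  neg (and (neg A) (neg B))

/-- The dual `◇` of the historical necessity modality. -/
def dia (A : Form Ag PVar PConst PropVar) : Form Ag PVar PConst PropVar :=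
  neg (box (neg A))

/-- Falsum, defined as usual. -/
def bot [Inhabited PropVar] : Form Ag PVar PConst PropVar :=
  and (pv default) (neg (pv default))

end Form

/-- Conjunction of a nonempty list of formulas (head plus tail). -/
def andList {Ag PVar PConst PropVar : Type} :
    Form Ag PVar PConst PropVar → List (Form Ag PVar PConst PropVar) →
      Form Ag PVar PConst PropVar
  | A, [] => A
  | A, B :: L => Form.and A (andList B L)

/-- Disjunction of a list of formulas. -/
def bigOr {Ag PVar PConst PropVar : Type} [Inhabited PropVar] :
    List (Form Ag PVar PConst PropVar) → Form Ag PVar PConst PropVar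
  | [] => Form.bot
  | [A] => A
  | A :: B :: L => Form.or A (bigOr (B :: L))

/-- A classical propositional tautology: a formula true under every Boolean valuation
commuting with `∧` and `¬` (all other formulas being treated as atoms). -/
def Tautology {Ag PVar PConst PropVar : Type} (A : Form Ag PVar PConst PropVar) : Prop :=
  ∀ v : Form Ag PVar PConst PropVar → Bool,
    (∀ B C, v (Form.and B C) = (v B && v C)) →
    (∀ B, v (Form.neg B) = !v B) →
    v A = true

/-- The axiom schemes (A0)–(A9) of Σ_D. -/
inductive Ax {Ag PVar PConst PropVar : Type} : Form Ag PVar PConst PropVar → Prop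
  -- (A0) classical propositional tautologies
  | a0 {A} : Tautology A → Ax A
  -- (A1) S5 axioms for □
  | boxK {A B} : Ax (Form.imp (Form.box (Form.imp A B))
      (Form.imp (Form.box A) (Form.box B)))
  | boxT {A} : Ax (Form.imp (Form.box A) A)
  | box4 {A} : Ax (Form.imp (Form.box A) (Form.box (Form.box A)))
  | box5 {A} : Ax (Form.imp (Form.neg (Form.box A)) (Form.box (Form.neg (Form.box A))))
  -- (A1) S5 axioms for each [j]
  | stitK {j : Ag} {A B} : Ax (Form.imp (Form.stit j (Form.imp A B))
      (Form.imp (Form.stit j A) (Form.stit j B)))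
  | stitT {j : Ag} {A} : Ax (Form.imp (Form.stit j A) A)
  | stit4 {j : Ag} {A} : Ax (Form.imp (Form.stit j A) (Form.stit j (Form.stit j A)))
  | stit5 {j : Ag} {A} : Ax (Form.imp (Form.neg (Form.stit j A))
      (Form.stit j (Form.neg (Form.stit j A))))
  -- (A2)
  | a2 {j : Ag} {A} : Ax (Form.imp (Form.box A) (Form.stit j A))
  -- (A3), for pairwise distinct agents
  | a3 {p : Ag × Form Ag PVar PConst PropVar} {L : List (Ag × Form Ag PVar PConst PropVar)} :
      (((p :: L).map Prod.fst).Nodup) →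
      Ax (Form.imp
        (andList (Form.dia (Form.stit p.1 p.2)) (L.map fun q => Form.dia (Form.stit q.1 q.2)))
        (Form.dia (andList (Form.stit p.1 p.2) (L.map fun q => Form.stit q.1 q.2))))
  -- (A4)
  | a4 {s t : Pol PVar PConst} {A B} : Ax (Form.imp (Form.proves s (Form.imp A B))
      (Form.imp (Form.proves t A) (Form.proves (Pol.times s t) B)))
  -- (A5)
  | a5 {t : Pol PVar PConst} {A} : Ax (Form.imp (Form.proves t A)
      (Form.and (Form.proves (Pol.bang t) (Form.proves t A)) (Form.know A)))
  -- (A6)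
  | a6 {s t : Pol PVar PConst} {A} : Ax (Form.imp
      (Form.or (Form.proves s A) (Form.proves t A)) (Form.proves (Pol.plus s t) A))
  -- (A7) S4 axioms for K
  | knowK {A B} : Ax (Form.imp (Form.know (Form.imp A B))
      (Form.imp (Form.know A) (Form.know B)))
  | knowT {A} : Ax (Form.imp (Form.know A) A)
  | know4 {A} : Ax (Form.imp (Form.know A) (Form.know (Form.know A)))
  -- (A8)
  | a8 {A} : Ax (Form.imp (Form.know A) (Form.box (Form.know (Form.box A))))
  -- (A9)
  | a9 {t : Pol PVar PConst} : Ax (Form.imp (Form.box (Form.ann t))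
      (Form.know (Form.box (Form.ann t))))

/-- Iterated prefixes `c_n : … : c_1 : A` of instances `A` of the axiom schemes. -/
inductive ConstIter {Ag PVar PConst PropVar : Type} : Form Ag PVar PConst PropVar → Prop
  | base {c : PConst} {A} : Ax A → ConstIter (Form.proves (Pol.const c) A)
  | step {c : PConst} {B} : ConstIter B → ConstIter (Form.proves (Pol.const c) B)

/-- A constant specification: a set of formulas of the form `c_n : … : c_1 : A` with `A`
an instance of (A0)–(A9), closed under deleting the outermost constant. -/
def IsConstSpec {Ag PVar PConst PropVar : Type}
    (CS : Set (Form Ag PVar PConst PropVar)) : Prop :=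
  (∀ B ∈ CS, ConstIter B) ∧
  ∀ (c c' : PConst) (B : Form Ag PVar PConst PropVar),
    Form.proves (Pol.const c) (Form.proves (Pol.const c') B) ∈ CS →
    Form.proves (Pol.const c') B ∈ CS

/-- Provability in Σ_D(CS): axioms (A0)–(A9), modus ponens (R1), K-necessitation (R2),
the rule (R_D) and the rule (R_CS). -/
inductive Proves {Ag PVar PConst PropVar : Type} [Inhabited PropVar]
    (CS : Set (Form Ag PVar PConst PropVar)) : Form Ag PVar PConst PropVar → Prop
  | ax {A} : Ax A → Proves CS A
  | mp {A B} : Proves CS (Form.imp A B) → Proves CS A → Proves CS B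
  | nec {A} : Proves CS A → Proves CS (Form.know A)
  | rd {A : Form Ag PVar PConst PropVar} {ts ss : List (Pol PVar PConst)}
      (hne : ts ++ ss ≠ []) :
      Proves CS (Form.imp (Form.know A)
        (bigOr ((ts.map fun t => Form.neg (Form.box (Form.ann t))) ++
                (ss.map fun s => Form.box (Form.ann s))))) →
      Proves CS (Form.imp (Form.know A)
        (bigOr ((ts.map fun t => Form.neg (Form.ann t)) ++
                (ss.map fun s => Form.ann s))))
  | rcs {B} : B ∈ CS → Proves CS B

/-- Γ is consistent in Σ_D(CS): no finite nonempty conjunction of members of Γ provably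
implies falsum. -/
def CSConsistent {Ag PVar PConst PropVar : Type} [Inhabited PropVar]
    (CS Γ : Set (Form Ag PVar PConst PropVar)) : Prop :=
  ¬ ∃ (A : Form Ag PVar PConst PropVar) (L : List (Form Ag PVar PConst PropVar)),
      A ∈ Γ ∧ (∀ B ∈ L, B ∈ Γ) ∧ Proves CS (Form.imp (andList A L) Form.bot)

/-- A jstit model for `Ag`: a jstit frame together with `Act`, an admissible evidence
function `E` and an evaluation `V`, subject to the semantical constraints. -/
structure JstitModel (Mo : Type) (Ag PVar PConst PropVar : Type)
    extends JstitFrame Mo Ag where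
  act : Mo → Set Mo → Set (Pol PVar PConst)
  ev : Mo → Pol PVar PConst → Set (Form Ag PVar PConst PropVar)
  val : PropVar → Set (Mo × Set Mo)
  -- monotonicity of evidence
  ev_mono : ∀ m m' t, Re m m' → ev m t ⊆ ev m' t
  -- evidence closure properties
  ev_app : ∀ m s t A B, Form.imp A B ∈ ev m s → A ∈ ev m t → B ∈ ev m (Pol.times s t)
  ev_sum_left : ∀ m s t, ev m s ⊆ ev m (Pol.plus s t)
  ev_sum_right : ∀ m s t, ev m t ⊆ ev m (Pol.plus s t)
  ev_bang : ∀ m t A, A ∈ ev m t → Form.proves t A ∈ ev m (Pol.bang t)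
  -- expansion of presented proofs
  expansion : ∀ m m' h, toTemporalFrame.lt m' m → h ∈ toTemporalFrame.H m →
    act m' h ⊆ act m h
  -- no new proofs guaranteed
  no_new : ∀ m t, (∀ h ∈ toTemporalFrame.H m, t ∈ act m h) →
    ∃ m' h, toTemporalFrame.lt m' m ∧ h ∈ toTemporalFrame.H m ∧ t ∈ act m' h
  -- presenting a new proof makes histories divide
  divide : ∀ m h h', h ∈ toTemporalFrame.H m → h' ∈ toTemporalFrame.H m →
    toTemporalFrame.Undiv m h h' → act m h = act m h'
  -- presented proofs are epistemically transparent
  transparent : ∀ m m' t, Re m m' → (∀ h ∈ toTemporalFrame.H m, t ∈ act m h) →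
    ∀ h' ∈ toTemporalFrame.H m', t ∈ act m' h'

namespace JstitModel

variable {Mo Ag PVar PConst PropVar : Type}

/-- `Act_m`, the set of proofs presented at `m` under every history through `m`. -/
def ActM (M : JstitModel Mo Ag PVar PConst PropVar) (m : Mo) : Set (Pol PVar PConst) :=
  { t | ∀ h ∈ M.toTemporalFrame.H m, t ∈ M.act m h }

/-- The satisfaction relation for jstit models. -/
def Sat (M : JstitModel Mo Ag PVar PConst PropVar) :
    Form Ag PVar PConst PropVar → Mo → Set Mo → Prop
  | Form.pv p, m, h => (m, h) ∈ M.val p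
  | Form.and A B, m, h => M.Sat A m h ∧ M.Sat B m h
  | Form.neg A, m, h => ¬ M.Sat A m h
  | Form.stit j A, m, h => ∀ h' C, C ∈ M.choice m j → h ∈ C → h' ∈ C → M.Sat A m h'
  | Form.box A, m, _ => ∀ h' ∈ M.toTemporalFrame.H m, M.Sat A m h'
  | Form.know A, m, _ => ∀ m' h', M.R m m' → h' ∈ M.toTemporalFrame.H m' → M.Sat A m' h'
  | Form.proves t A, m, _ => A ∈ M.ev m t ∧
      ∀ m' h', M.Re m m' → h' ∈ M.toTemporalFrame.H m' → M.Sat A m' h'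
  | Form.ann t, m, h => t ∈ M.act m h

/-- Validity of a formula in a jstit model. -/
def Valid (M : JstitModel Mo Ag PVar PConst PropVar)
    (A : Form Ag PVar PConst PropVar) : Prop :=
  ∀ m h, h ∈ M.toTemporalFrame.H m → M.Sat A m h

end JstitModel

/-- CS-normality of a jstit model. -/
def CSNormal {Mo Ag PVar PConst PropVar : Type}
    (CS : Set (Form Ag PVar PConst PropVar))
    (M : JstitModel Mo Ag PVar PConst PropVar) : Prop :=
  ∀ (c : PConst) (m : Mo) (A : Form Ag PVar PConst PropVar),
    Form.proves (Pol.const c) A ∈ CS → A ∈ M.ev m (Pol.const c)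

section Helper

variable {Ag PVar PConst PropVar : Type}

/-- Prop-valued Boolean valuations. -/
structure IsVal (v : Form Ag PVar PConst PropVar → Prop) : Prop where
  and' : ∀ B C, v (Form.and B C) ↔ (v B ∧ v C)
  neg' : ∀ B, v (Form.neg B) ↔ ¬ v B

namespace IsVal

variable {v : Form Ag PVar PConst PropVar → Prop}

theorem imp' (hv : IsVal v) (A B) : v (Form.imp A B) ↔ (v A → v B) := by
  simp only [Form.imp, hv.and', hv.neg']; tauto

theorem or' (hv : IsVal v) (A B) : v (Form.or A B) ↔ (v A ∨ v B) := by
  simp only [Form.or, hv.and', hv.neg']; tauto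

theorem bot' [Inhabited PropVar] (hv : IsVal v) : ¬ v Form.bot := by
  simp only [Form.bot, hv.and', hv.neg']; tauto

theorem bigOr' [Inhabited PropVar] (hv : IsVal v) : ∀ L : List (Form Ag PVar PConst PropVar),
    v (bigOr L) ↔ ∃ B ∈ L, v B
  | [] => by simpa [bigOr] using hv.bot'
  | [A] => by simp [bigOr]
  | A :: B :: L => by
      have := bigOr' hv (B :: L)
      rw [bigOr, hv.or', this]; simp

theorem andList' (hv : IsVal v) : ∀ (A : Form Ag PVar PConst PropVar) (L : List (Form Ag PVar PConst PropVar)),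
    v (andList A L) ↔ (v A ∧ ∀ B ∈ L, v B)
  | A, [] => by simp [andList]
  | A, B :: L => by
      have := andList' hv B L
      rw [andList, hv.and', this]; simp

theorem taut (hv : IsVal v) {A} (hA : Tautology A) : v A := by
  classical
  have := hA (fun B => decide (v B)) (fun B C => by simp [hv.and']) (fun B => by simp [hv.neg'])
  simpa using this

end IsVal

theorem taut_of {A : Form Ag PVar PConst PropVar}
    (h : ∀ v : Form Ag PVar PConst PropVar → Prop, IsVal v → v A) : Tautology A := by
  intro v h1 h2
  exact h (fun B => v B = true) ⟨fun B C => by simp [h1], fun B => by simp [h2]⟩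

/-! Soundness -/

theorem sat_isVal {Mo : Type} (M : JstitModel Mo Ag PVar PConst PropVar) (m : Mo) (h : Set Mo) :
    IsVal (fun A => M.Sat A m h) :=
  ⟨fun B C => by simp [JstitModel.Sat], fun B => by simp [JstitModel.Sat]⟩

theorem exists_hist {Mo : Type} (T : TemporalFrame Mo) (m : Mo) : ∃ h, h ∈ T.H m := by
  obtain ⟨h, hh, hm⟩ := (IsChain.singleton (r := T.le) (a := m)).exists_maxChain
  exact ⟨h, ⟨hh.1, fun h' hc hs => (hh.2 hc hs).symm⟩, hm rfl⟩

theorem hist_down {Mo : Type} (T : TemporalFrame Mo) {m m' : Mo} {h : Set Mo}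
    (hh : h ∈ T.H m) (hle : T.le m' m) : m' ∈ h := by
  obtain ⟨⟨hc, hmax⟩, hm⟩ := hh
  have : IsChain T.le (insert m' h) := by
    refine hc.insert ?_
    intro b hb _
    by_cases hbm : b = m
    · subst hbm; exact Or.inl hle
    · rcases hc hb hm hbm with h1 | h1
      · exact T.no_backward m m' b hle h1
      · exact Or.inl (T.le_trans hle h1)
  have := hmax _ this (Set.subset_insert _ _)
  rw [← this]; exact Set.mem_insert _ _

theorem hist_down' {Mo : Type} (T : TemporalFrame Mo) {m m' : Mo} {h : Set Mo}
    (hh : h ∈ T.H m) (hle : T.le m' m) : h ∈ T.H m' := ⟨hh.1, hist_down T hh hle⟩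

theorem sound_ax {Mo : Type} (M : JstitModel Mo Ag PVar PConst PropVar)
    {A : Form Ag PVar PConst PropVar} (hA : Ax A) : M.Valid A := by
  classical
  intro m h hh
  have hv := sat_isVal M m h
  have imp' := hv.imp'
  have and' := hv.and'
  have or' := hv.or'
  have neg' := hv.neg'
  cases hA with
  | a0 ht => exact hv.taut ht
  | boxK =>
    simp only [imp']
    intro h1 h2 h' hh'
    exact ((sat_isVal M m h').imp' _ _).1 (h1 h' hh') (h2 h' hh')
  | boxT => simp only [imp']; intro h1; exact h1 h hh
  | box4 => simp only [imp']; intro h1 _ _; exact h1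
  | box5 => simp only [imp']; intro h1 _ _; exact h1
  | stitK =>
    simp only [imp']
    intro h1 h2 h' C hC hc hc'
    exact ((sat_isVal M m h').imp' _ _).1 (h1 h' C hC hc hc') (h2 h' C hC hc hc')
  | @stitT j A =>
    simp only [imp']; intro h1
    obtain ⟨C, hC, hc⟩ := M.choice_cover m j h hh
    exact h1 h C hC hc hc
  | @stit4 j A =>
    simp only [imp']; intro h1 h' C hC hc hc' h'' C' hC' hd hd'
    have : C = C' := M.choice_disjoint m j C C' hC hC' ⟨h', hc', hd⟩
    subst this
    exact h1 h'' C hC hc hd'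
  | @stit5 j A =>
    simp only [imp']; intro h1 h' C hC hc hc' h2
    apply h1
    intro h'' C' hC' hd hd'
    have : C = C' := M.choice_disjoint m j C C' hC hC' ⟨h, hc, hd⟩
    subst this
    exact h2 h'' C hC hc' hd'
  | @a2 j A =>
    simp only [imp']; intro h1 h' C hC _ hc'
    exact h1 h' (M.choice_cell_sub m j C hC hc')
  | @a3 p L hnd =>
    simp only [imp']
    intro h1
    have h1' := (hv.andList' _ _).1 h1
    have hall : ∀ q ∈ p :: L, ∃ g ∈ M.toTemporalFrame.H m, M.Sat (Form.stit q.1 q.2) m g := by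
      intro q hq
      have : M.Sat (Form.dia (Form.stit q.1 q.2)) m h := by
        rcases List.mem_cons.1 hq with rfl | hq
        · exact h1'.1
        · exact h1'.2 _ (List.mem_map_of_mem hq)
      by_contra hcon
      push Not at hcon
      exact this (fun g hg => hcon g hg)
    have hf : ∀ i : Ag, ∃ C ∈ M.choice m i, ∀ q ∈ p :: L, q.1 = i → ∀ g ∈ C, M.Sat q.2 m g := by
      intro i
      by_cases hi : ∃ q ∈ p :: L, q.1 = i
      · obtain ⟨q, hq, rfl⟩ := hi
        obtain ⟨g, hg, hs⟩ := hall q hq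
        obtain ⟨C, hC, hc⟩ := M.choice_cover m q.1 g hg
        refine ⟨C, hC, fun q' hq' he g' hg' => ?_⟩
        have : q' = q := List.inj_on_of_nodup_map hnd hq' hq he
        subst this
        exact hs g' C hC hc hg'
      · obtain ⟨C, hC, _⟩ := M.choice_cover m i h hh
        exact ⟨C, hC, fun q hq he => (hi ⟨q, hq, he⟩).elim⟩
    choose f hfc hfs using hf
    obtain ⟨g, hg⟩ := M.independence m f hfc
    rw [Set.mem_iInter] at hg
    have hgs : ∀ q ∈ p :: L, M.Sat (Form.stit q.1 q.2) m g := by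
      intro q hq g' C hC hc hc'
      have : f q.1 = C := M.choice_disjoint m q.1 _ _ (hfc _) hC ⟨g, hg _, hc⟩
      subst this
      exact hfs q.1 q hq rfl g' hc'
    intro hcon
    refine hcon g (M.choice_cell_sub m p.1 _ (hfc _) (hg p.1)) ?_
    refine ((sat_isVal M m g).andList' _ _).2 ⟨hgs p (by simp), ?_⟩
    intro B hB
    obtain ⟨q, hq, rfl⟩ := List.mem_map.1 hB
    exact hgs q (by simp [hq])
  | @a4 s t A B =>
    simp only [imp']
    intro h1 h2
    exact ⟨M.ev_app m s t A B h1.1 h2.1, fun m' h' hr hh' =>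
      ((sat_isVal M m' h').imp' _ _).1 (h1.2 m' h' hr hh') (h2.2 m' h' hr hh')⟩
  | @a5 t A =>
    simp only [imp', and']
    intro h1
    refine ⟨⟨M.ev_bang m t A h1.1, fun m' h' hr hh' => ⟨M.ev_mono m m' t hr h1.1, ?_⟩⟩, ?_⟩
    · intro m'' h'' hr' hh''
      exact h1.2 m'' h'' (M.Re_trans hr hr') hh''
    · intro m' h' hr hh'
      exact h1.2 m' h' (M.R_sub_Re hr) hh'
  | @a6 s t A =>
    simp only [imp', or']
    rintro (h1 | h1)
    · exact ⟨M.ev_sum_left m s t h1.1, h1.2⟩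
    · exact ⟨M.ev_sum_right m s t h1.1, h1.2⟩
  | knowK =>
    simp only [imp']
    intro h1 h2 m' h' hr hh'
    exact ((sat_isVal M m' h').imp' _ _).1 (h1 m' h' hr hh') (h2 m' h' hr hh')
  | knowT => simp only [imp']; intro h1; exact h1 m h (M.R_refl m) hh
  | know4 =>
    simp only [imp']; intro h1 m' h' hr hh' m'' h'' hr' hh''
    exact h1 m'' h'' (M.R_trans hr hr') hh''
  | a8 =>
    simp only [imp']; intro h1 _ _ m' h' hr _ h'' hh''
    exact h1 m' h'' hr hh''
  | @a9 t =>
    simp only [imp']; intro h1 m' h' hr _ h'' hh''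
    exact M.transparent m m' t (M.R_sub_Re hr) h1 h'' hh''

theorem sound_rd {Mo : Type} (M : JstitModel Mo Ag PVar PConst PropVar)
    (hM : M.toTemporalFrame.MixSucc) (m : Mo) (h : Set Mo) (hh : h ∈ M.toTemporalFrame.H m) :
    ∃ m2, h ∈ M.toTemporalFrame.H m2 ∧ M.R m m2 ∧
      ∀ t, t ∈ M.act m h ↔ (∀ g ∈ M.toTemporalFrame.H m2, t ∈ M.act m2 g) := by
  by_cases hall : ∀ g ∈ M.toTemporalFrame.H m, M.act m h = M.act m g
  · exact ⟨m, hh, M.R_refl m, fun t => ⟨fun ht g hg => hall g hg ▸ ht, fun ht => ht h hh⟩⟩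
  · push Not at hall
    obtain ⟨g, hg, hne⟩ := hall
    have hnu : ¬ M.toTemporalFrame.Undiv m h g := fun hu => hne (M.divide m h g hh hg hu)
    have hex : ∃ m1 ∈ h, M.toTemporalFrame.lt m m1 := by
      by_contra hcon
      push Not at hcon
      have hsub : h ⊆ g := by
        intro x hx
        apply hist_down _ hg
        by_cases hxm : x = m
        · subst hxm; exact M.le_refl _
        · rcases hh.1.1 hx hh.2 hxm with h1 | h1
          · exact h1
          · exact (hcon x hx ⟨h1, fun e => hxm e.symm⟩).elim
      have := hh.1.2 g hg.1.1 hsub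
      exact hne (by rw [this])
    obtain ⟨m1, hm1, hlt⟩ := hex
    rcases hM m m1 with h1 | h1
    · obtain ⟨m2, hle, hnx⟩ := h1 hlt
      have hh2 : h ∈ M.toTemporalFrame.H m2 := hist_down' _ ⟨hh.1, hm1⟩ hle
      have heq : ∀ g ∈ M.toTemporalFrame.H m2, M.act m h = M.act m g := by
        intro g hg
        exact M.divide m h g hh (hist_down' _ hg hnx.1.1) ⟨m2, hnx.1, hh2.2, hg.2⟩
      refine ⟨m2, hh2, M.le_sub_R hnx.1.1, fun t => ⟨fun ht g hg => ?_, fun ht => ?_⟩⟩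
      · exact M.expansion m2 m g hnx.1 hg (heq g hg ▸ ht)
      · obtain ⟨m', g, hl, hg, hta⟩ := M.no_new m2 t ht
        rw [heq g hg]
        have hle' := hnx.2 m' hl
        by_cases he : m' = m
        · subst he; exact hta
        · exact M.expansion m m' g ⟨hle', he⟩ (hist_down' _ hg hnx.1.1) hta
    · exact (hnu (h1 h hh g hg)).elim

theorem sound [Inhabited PropVar] {CS : Set (Form Ag PVar PConst PropVar)} (hCS : IsConstSpec CS)
    {Mo : Type} (M : JstitModel Mo Ag PVar PConst PropVar)
    (hM : M.toTemporalFrame.MixSucc) (hN : CSNormal CS M)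
    {A : Form Ag PVar PConst PropVar} (hA : Proves CS A) : M.Valid A := by
  induction hA with
  | ax h => exact sound_ax M h
  | mp _ _ ih1 ih2 =>
    intro m h hh
    exact ((sat_isVal M m h).imp' _ _).1 (ih1 m h hh) (ih2 m h hh)
  | nec _ ih => intro m h hh m' h' _ hh'; exact ih m' h' hh'
  | @rd A ts ss hne _ ih =>
    intro m h hh
    refine ((sat_isVal M m h).imp' _ _).2 fun hK => ?_
    obtain ⟨m2, hh2, hR, ht⟩ := sound_rd M hM m h hh
    have h2 := ((sat_isVal M m2 h).imp' _ _).1 (ih m2 h hh2)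
      (fun m' h' hr hh' => hK m' h' (M.R_trans hR hr) hh')
    obtain ⟨B, hB, hs⟩ := ((sat_isVal M m2 h).bigOr' _).1 h2
    refine ((sat_isVal M m h).bigOr' _).2 ?_
    rcases List.mem_append.1 hB with hB | hB
    · obtain ⟨t, htm, rfl⟩ := List.mem_map.1 hB
      refine ⟨Form.neg (Form.ann t), List.mem_append_left _ (List.mem_map.2 ⟨t, htm, rfl⟩), ?_⟩
      intro hc
      exact hs ((ht t).1 hc)
    · obtain ⟨t, htm, rfl⟩ := List.mem_map.1 hB
      exact ⟨Form.ann t, List.mem_append_right _ (List.mem_map.2 ⟨t, htm, rfl⟩), (ht t).2 hs⟩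
  | @rcs B hB =>
    have hc := hCS.1 B hB
    induction hc with
    | base hax =>
      intro m h hh
      exact ⟨hN _ m _ hB, fun m' h' _ hh' => sound_ax M hax m' h' hh'⟩
    | @step c B hB' ih =>
      have hBc : B ∈ CS := by
        cases hB' with
        | base _ => exact hCS.2 _ _ _ hB
        | step _ => exact hCS.2 _ _ _ hB
      intro m h hh
      exact ⟨hN _ m _ hB, fun m' h' _ hh' => ih hBc m' h' hh'⟩

/-- The trivial one-moment model. -/
def unitModel (Ag PVar PConst PropVar : Type) : JstitModel Unit Ag PVar PConst PropVar where
  le _ _ := True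
  le_refl _ := trivial
  le_antisymm _ _ := rfl
  le_trans _ _ := trivial
  nonempty := ⟨()⟩
  hist_conn _ _ := ⟨(), trivial, trivial⟩
  no_backward _ _ _ _ _ := Or.inl trivial
  choice _ _ := {{Set.univ}}
  choice_cell_nonempty := by rintro m j C rfl; exact ⟨_, rfl⟩
  choice_cell_sub := by
    rintro m j C rfl h rfl
    refine ⟨⟨fun _ _ _ _ _ => Or.inl trivial, fun h' _ hs => Set.univ_subset_iff.1 hs⟩, trivial⟩
  choice_cover := by
    rintro m j h ⟨_, hm⟩
    refine ⟨_, rfl, ?_⟩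
    ext x; simpa using hm
  choice_disjoint := by rintro m j C C' rfl rfl _; rfl
  no_choice_undiv := by rintro m j h h' _ _ ⟨m', ⟨_, h2⟩, _⟩; exact (h2 rfl).elim
  independence := by
    intro m f hf
    refine ⟨Set.univ, Set.mem_iInter.2 fun j => ?_⟩
    rw [hf j]; rfl
  R _ _ := True
  Re _ _ := True
  R_refl _ := trivial
  R_trans _ _ := trivial
  Re_refl _ := trivial
  Re_trans _ _ := trivial
  R_sub_Re _ := trivial
  le_sub_R _ := trivial
  act _ _ := ∅
  ev _ _ := Set.univ
  val _ := ∅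
  ev_mono _ _ _ _ := subset_rfl
  ev_app _ _ _ _ _ _ _ := trivial
  ev_sum_left _ _ _ := subset_rfl
  ev_sum_right _ _ _ := subset_rfl
  ev_bang _ _ _ _ := trivial
  expansion _ _ _ _ _ := subset_rfl
  no_new m t h := by
    exact (h Set.univ ⟨⟨fun _ _ _ _ _ => Or.inl trivial,
      fun h' _ hs => Set.univ_subset_iff.1 hs⟩, trivial⟩).elim
  divide _ _ _ _ _ _ := rfl
  transparent m m' t _ h := by
    exact (h Set.univ ⟨⟨fun _ _ _ _ _ => Or.inl trivial,
      fun h' _ hs => Set.univ_subset_iff.1 hs⟩, trivial⟩).elim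

/-! Logic: maximal theories -/

/-- Derivability from a set of hypotheses. -/
inductive Der [Inhabited PropVar] (CS Γ : Set (Form Ag PVar PConst PropVar)) :
    Form Ag PVar PConst PropVar → Prop
  | thm {A} : Proves CS A → Der CS Γ A
  | hyp {A} : A ∈ Γ → Der CS Γ A
  | mp {A B} : Der CS Γ (Form.imp A B) → Der CS Γ A → Der CS Γ B

/-- Maximal consistent theories. -/
structure IsMCS [Inhabited PropVar] (CS w : Set (Form Ag PVar PConst PropVar)) : Prop where
  thm : ∀ {A}, Proves CS A → A ∈ w
  mp : ∀ {A B}, Form.imp A B ∈ w → A ∈ w → B ∈ w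
  neg : ∀ A, Form.neg A ∈ w ↔ A ∉ w

variable [Inhabited PropVar] {CS : Set (Form Ag PVar PConst PropVar)}

theorem ptaut {A : Form Ag PVar PConst PropVar}
    (h : ∀ v : Form Ag PVar PConst PropVar → Prop, IsVal v → v A) : Proves CS A :=
  Proves.ax (Ax.a0 (taut_of h))

theorem Der.mono {Γ Δ : Set (Form Ag PVar PConst PropVar)} (hs : Γ ⊆ Δ) {A}
    (h : Der CS Γ A) : Der CS Δ A := by
  induction h with
  | thm h => exact .thm h
  | hyp h => exact .hyp (hs h)
  | mp _ _ ih1 ih2 => exact .mp ih1 ih2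

theorem Der.ded {Γ : Set (Form Ag PVar PConst PropVar)} {A B}
    (h : Der CS (insert B Γ) A) : Der CS Γ (Form.imp B A) := by
  have key : ∀ A, Der CS Γ A → Der CS Γ (Form.imp B A) := fun A h =>
    .mp (.thm (ptaut fun v hv => by simp only [hv.imp']; tauto)) h
  induction h with
  | thm h => exact key _ (.thm h)
  | @hyp A h =>
    rcases h with rfl | h
    · exact .thm (ptaut fun v hv => by simp only [hv.imp']; tauto)
    · exact key _ (.hyp h)
  | @mp A C _ _ ih1 ih2 =>
    refine .mp (.mp (.thm (ptaut fun v hv => ?_)) ih1) ih2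
    simp only [hv.imp']; tauto

theorem Der.chain {c : Set (Set (Form Ag PVar PConst PropVar))} (hc : IsChain (· ⊆ ·) c)
    (hne : c.Nonempty) {A} (h : Der CS (⋃₀ c) A) : ∃ Γ ∈ c, Der CS Γ A := by
  induction h with
  | thm h => obtain ⟨Γ, hΓ⟩ := hne; exact ⟨Γ, hΓ, .thm h⟩
  | hyp h => obtain ⟨Γ, hΓ, h⟩ := h; exact ⟨Γ, hΓ, .hyp h⟩
  | mp _ _ ih1 ih2 =>
    obtain ⟨Γ, hΓ, h1⟩ := ih1
    obtain ⟨Δ, hΔ, h2⟩ := ih2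
    rcases hc.total hΓ hΔ with h | h
    · exact ⟨Δ, hΔ, .mp (h1.mono h) h2⟩
    · exact ⟨Γ, hΓ, .mp h1 (h2.mono h)⟩

theorem lindenbaum {Γ : Set (Form Ag PVar PConst PropVar)} {A}
    (h : ¬ Der CS Γ A) : ∃ w, IsMCS CS w ∧ Γ ⊆ w ∧ A ∉ w := by
  obtain ⟨w, hΓ, hw⟩ := zorn_subset_nonempty {Δ | ¬ Der CS Δ A} (by
    intro c hcs hc hne
    refine ⟨⋃₀ c, fun hd => ?_, fun s hs => Set.subset_sUnion_of_mem hs⟩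
    obtain ⟨Δ, hΔ, hd⟩ := hd.chain hc hne
    exact hcs hΔ hd) Γ h
  have hn : ¬ Der CS w A := hw.1
  have hins : ∀ B, B ∉ w → Der CS w (Form.imp B A) := by
    intro B hB
    by_contra hcon
    have hx : ¬ Der CS (insert B w) A := fun hd => hcon hd.ded
    exact hB (hw.2 hx (Set.subset_insert B w) (Set.mem_insert B w))
  have hcl : ∀ B, Der CS w B → B ∈ w := by
    intro B hd
    by_contra hB
    exact hn (.mp (hins B hB) hd)
  refine ⟨w, ⟨fun h => hcl _ (.thm h), fun h1 h2 => hcl _ (.mp (.hyp h1) (.hyp h2)), ?_⟩, hΓ,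
    fun hA => hn (.hyp hA)⟩
  intro B
  constructor
  · intro h1 h2
    refine hn (.mp (.mp (.thm (ptaut fun v hv => ?_)) (.hyp h1)) (.hyp h2))
    simp only [hv.imp', hv.neg']; tauto
  · intro h1
    by_contra h2
    refine hn (.mp (.mp (.thm (ptaut fun v hv => ?_)) (hins _ h1)) (hins _ h2))
    simp only [hv.imp', hv.neg']; tauto

namespace IsMCS

variable {w : Set (Form Ag PVar PConst PropVar)}

theorem imp_iff (hw : IsMCS CS w) (A B) : Form.imp A B ∈ w ↔ (A ∈ w → B ∈ w) := by
  constructor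
  · exact hw.mp
  · intro h
    by_cases hA : A ∈ w
    · exact hw.mp (hw.thm (ptaut fun v hv => by simp only [hv.imp']; tauto)) (h hA)
    · exact hw.mp (hw.thm (ptaut fun v hv => by simp only [hv.imp', hv.neg']; tauto))
        ((hw.neg A).2 hA)

theorem isVal (hw : IsMCS CS w) : IsVal (fun A => A ∈ w) := by
  refine ⟨fun B C => ⟨fun h => ⟨?_, ?_⟩, fun h => ?_⟩, hw.neg⟩
  · exact hw.mp (hw.thm (ptaut fun v hv => by simp only [hv.imp', hv.and']; tauto)) h
  · exact hw.mp (hw.thm (ptaut fun v hv => by simp only [hv.imp', hv.and']; tauto)) h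
  · exact hw.mp (hw.mp (hw.thm (ptaut fun v hv => by
      simp only [hv.imp', hv.and']; tauto)) h.1) h.2

theorem ax (hw : IsMCS CS w) {A B : Form Ag PVar PConst PropVar} (h : Ax (Form.imp A B))
    (hA : A ∈ w) : B ∈ w := hw.mp (hw.thm (.ax h)) hA

end IsMCS

/-- Normal operators. -/
structure NormalOp (CS : Set (Form Ag PVar PConst PropVar))
    (O : Form Ag PVar PConst PropVar → Form Ag PVar PConst PropVar) : Prop where
  nec : ∀ {A}, Proves CS A → Proves CS (O A)
  K : ∀ {A B}, Ax (Form.imp (O (Form.imp A B)) (Form.imp (O A) (O B)))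
  T : ∀ {A}, Ax (Form.imp (O A) A)
  four : ∀ {A}, Ax (Form.imp (O A) (O (O A)))

theorem know_normal : NormalOp CS Form.know := ⟨.nec, .knowK, .knowT, .know4⟩

theorem box_normal : NormalOp CS Form.box := by
  refine ⟨fun h => ?_, .boxK, .boxT, .box4⟩
  exact .mp (.ax .knowT) (.mp (.ax .boxT) (.mp (.ax .a8) h.nec))

theorem stit_normal (j : Ag) : NormalOp CS (Form.stit j) := by
  refine ⟨fun h => ?_, .stitK, .stitT, .stit4⟩
  exact .mp (.ax .a2) (box_normal.nec h)

namespace NormalOp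

variable {O : Form Ag PVar PConst PropVar → Form Ag PVar PConst PropVar}
  {w : Set (Form Ag PVar PConst PropVar)}

theorem mono (hO : NormalOp CS O) (hw : IsMCS CS w) {A B} (h : Proves CS (Form.imp A B))
    (hA : O A ∈ w) : O B ∈ w :=
  hw.mp (hw.ax hO.K (hw.thm (hO.nec h))) hA

theorem der (hO : NormalOp CS O) (hw : IsMCS CS w) {A} (h : Der CS {B | O B ∈ w} A) :
    O A ∈ w := by
  induction h with
  | thm h => exact hw.thm (hO.nec h)
  | hyp h => exact h
  | mp _ _ ih1 ih2 => exact hw.mp (hw.ax hO.K ih1) ih2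

theorem exist (hO : NormalOp CS O) (hw : IsMCS CS w) {A} (h : O A ∉ w) :
    ∃ u, IsMCS CS u ∧ (∀ B, O B ∈ w → O B ∈ u) ∧ A ∉ u := by
  obtain ⟨u, hu, hs, hA⟩ := lindenbaum (fun hd => h (hO.der hw hd))
  exact ⟨u, hu, fun B hB => hs (hw.ax hO.four hB), hA⟩

/-- With axiom 5, inclusion of `O`-formulas is symmetric. -/
theorem symm (hO : NormalOp CS O) (h5 : ∀ A, Ax (Form.imp (Form.neg (O A)) (O (Form.neg (O A)))))
    (hw : IsMCS CS w) {u} (hu : IsMCS CS u) (h : ∀ B, O B ∈ w → O B ∈ u) (B) :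
    O B ∈ w ↔ O B ∈ u := by
  refine ⟨h B, fun hB => ?_⟩
  by_contra hn
  exact (hu.neg _).1 (hu.ax hO.T (h _ (hw.ax (h5 B) ((hw.neg _).2 hn)))) hB

end NormalOp

theorem box_exist {w : Set (Form Ag PVar PConst PropVar)} (hw : IsMCS CS w) {A}
    (h : Form.box A ∉ w) :
    ∃ u, IsMCS CS u ∧ (∀ B, Form.box B ∈ w ↔ Form.box B ∈ u) ∧ A ∉ u := by
  obtain ⟨u, hu, hs, hA⟩ := box_normal.exist hw h
  exact ⟨u, hu, box_normal.symm (fun _ => .box5) hw hu hs, hA⟩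

theorem stit_exist {j : Ag} {w : Set (Form Ag PVar PConst PropVar)} (hw : IsMCS CS w) {A}
    (h : Form.stit j A ∉ w) :
    ∃ u, IsMCS CS u ∧ (∀ B, Form.stit j B ∈ w ↔ Form.stit j B ∈ u) ∧ A ∉ u := by
  obtain ⟨u, hu, hs, hA⟩ := (stit_normal j).exist hw h
  exact ⟨u, hu, (stit_normal j).symm (fun _ => .stit5) hw hu hs, hA⟩

/-- Stit-equivalence implies box-equivalence. -/
theorem stit_sub_box {j : Ag} {w u : Set (Form Ag PVar PConst PropVar)} (hw : IsMCS CS w)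
    (hu : IsMCS CS u) (h : ∀ B, Form.stit j B ∈ w ↔ Form.stit j B ∈ u) :
    ∀ B, Form.box B ∈ w ↔ Form.box B ∈ u := by
  refine box_normal.symm (fun _ => .box5) hw hu fun B hB => ?_
  exact hu.ax .stitT ((h _).1 (hw.ax .a2 (hw.ax .box4 hB)))

theorem know_box {w : Set (Form Ag PVar PConst PropVar)} (hw : IsMCS CS w) {A}
    (h : Form.know A ∈ w) : Form.box (Form.know A) ∈ w :=
  box_normal.mono hw (.mp (.mp (ptaut fun v hv => by
      simp only [hv.imp']; tauto) (Proves.nec (CS := CS) (.ax (.boxT (A := A))))) (.ax .knowK))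
    (hw.ax .a8 h)

theorem know_inv {w u : Set (Form Ag PVar PConst PropVar)} (hw : IsMCS CS w)
    (hu : IsMCS CS u) (h : ∀ B, Form.box B ∈ w ↔ Form.box B ∈ u) {A} (hA : Form.know A ∈ w) :
    Form.know A ∈ u := hu.ax .boxT ((h _).1 (know_box hw hA))

theorem proves_know {w : Set (Form Ag PVar PConst PropVar)} (hw : IsMCS CS w) {t A}
    (h : Form.proves t A ∈ w) : Form.know (Form.proves t A) ∈ w :=
  ((hw.isVal.and' _ _).1 (hw.ax .a5 ((hw.isVal.and' _ _).1 (hw.ax .a5 h)).1)).2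

theorem indep [Finite Ag] {a : Set (Form Ag PVar PConst PropVar)} (ha : IsMCS CS a)
    (w : Ag → Set (Form Ag PVar PConst PropVar)) (hw : ∀ j, IsMCS CS (w j))
    (hb : ∀ j B, Form.box B ∈ a ↔ Form.box B ∈ w j) :
    ∃ v, IsMCS CS v ∧ (∀ B, Form.box B ∈ a ↔ Form.box B ∈ v) ∧
      ∀ j B, Form.stit j B ∈ w j ↔ Form.stit j B ∈ v := by
  classical
  have hT : Proves CS (Form.neg (Form.bot : Form Ag PVar PConst PropVar)) :=
    ptaut fun v hv => (hv.neg' _).2 hv.bot'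
  have key : ∀ B, Der CS ({B | Form.box B ∈ a} ∪ {B | ∃ j C, B = Form.stit j C ∧ B ∈ w j}) B →
      ∃ g : Ag → Form Ag PVar PConst PropVar, (∀ j, Form.stit j (g j) ∈ w j) ∧
        ∀ v, IsMCS CS v → (∀ B, Form.box B ∈ a ↔ Form.box B ∈ v) →
          (∀ j, Form.stit j (g j) ∈ v) → B ∈ v := by
    intro B hB
    induction hB with
    | thm h => exact ⟨fun _ => Form.neg Form.bot, fun j => (hw j).thm ((stit_normal j).nec hT),
        fun v hv _ _ => hv.thm h⟩
    | hyp h =>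
      rcases h with h | ⟨j, C, rfl, h⟩
      · exact ⟨fun _ => Form.neg Form.bot, fun j => (hw j).thm ((stit_normal j).nec hT),
          fun v hv hv' _ => hv.ax .boxT ((hv' _).1 h)⟩
      · refine ⟨fun i => if i = j then C else Form.neg Form.bot, fun i => ?_, fun v hv _ h => ?_⟩
        · by_cases hi : i = j
          · subst hi; simpa using h
          · simp only [if_neg hi]; exact (hw i).thm ((stit_normal i).nec hT)
        · simpa using h j
    | mp _ _ ih1 ih2 =>
      obtain ⟨g, hg, h1⟩ := ih1
      obtain ⟨g', hg', h2⟩ := ih2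
      refine ⟨fun j => Form.and (g j) (g' j), fun j => ?_, fun v hv hv' h => ?_⟩
      · refine (hw j).mp ((hw j).ax .stitK ((stit_normal j).mono (hw j)
          (ptaut fun v hv => ?_) (hg j))) (hg' j)
        simp only [hv.imp', hv.and']; tauto
      · refine hv.mp (h1 v hv hv' fun j => ?_) (h2 v hv hv' fun j => ?_)
        · refine (stit_normal j).mono hv (ptaut fun v hv => ?_) (h j)
          simp only [hv.imp', hv.and']; tauto
        · refine (stit_normal j).mono hv (ptaut fun v hv => ?_) (h j)
          simp only [hv.imp', hv.and']; tauto
  have hnd : ¬ Der CS ({B | Form.box B ∈ a} ∪ {B | ∃ j C, B = Form.stit j C ∧ B ∈ w j})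
      (Form.bot : Form Ag PVar PConst PropVar) := by
    intro hd
    obtain ⟨g, hg, h⟩ := key _ hd
    have hdia : ∀ j, Form.dia (Form.stit j (g j)) ∈ a := by
      intro j
      refine (ha.neg _).2 fun hc => ?_
      exact ((hw j).neg _).1 ((hw j).ax .boxT ((hb j _).1 hc)) (hg j)
    obtain ⟨l, hl, hln⟩ : ∃ l : List Ag, (∀ j, j ∈ l) ∧ l.Nodup := by
      have := Fintype.ofFinite Ag
      exact ⟨Finset.univ.toList, by simp, Finset.nodup_toList _⟩
    cases l with
    | nil =>
      exact ha.isVal.bot' (h a ha (fun _ => Iff.rfl) fun j => by simpa using hl j)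
    | cons i l =>
      have hax := Ax.a3 (p := (i, g i)) (L := l.map fun j => (j, g j)) (by simpa [Function.comp_def] using hln)
      have h2 := ha.ax hax ((ha.isVal.andList' _ _).2 ⟨hdia i, fun B hB => by
        simp only [List.map_map, List.mem_map] at hB
        obtain ⟨j, _, rfl⟩ := hB
        exact hdia j⟩)
      obtain ⟨u, hu, hub, hu2⟩ := box_exist ha ((ha.neg _).1 h2)
      rw [hu.neg, not_not] at hu2
      have h3 := (hu.isVal.andList' _ _).1 hu2
      refine hu.isVal.bot' (h u hu hub fun j => ?_)
      rcases List.mem_cons.1 (hl j) with rfl | hj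
      · exact h3.1
      · exact h3.2 _ (by
          simp only [List.map_map, List.mem_map]
          exact ⟨j, hj, rfl⟩)
  obtain ⟨v, hv, hs, _⟩ := lindenbaum hnd
  refine ⟨v, hv, ?_, fun j => ?_⟩
  · exact box_normal.symm (fun _ => .box5) ha hv fun B hB => hs (Or.inl (ha.ax .box4 hB))
  · exact (stit_normal j).symm (fun _ => .stit5) (hw j) hv fun B hB =>
      hs (Or.inr ⟨j, B, rfl, hB⟩)

/-- Successor theories, by the rule (R_D). -/
theorem rd_succ [Nonempty PVar] {w : Set (Form Ag PVar PConst PropVar)} (hw : IsMCS CS w) :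
    ∃ u, IsMCS CS u ∧ (∀ A, Form.know A ∈ w → Form.know A ∈ u) ∧
      ∀ t, Form.box (Form.ann t) ∈ u ↔ Form.ann t ∈ w := by
  have hT : Proves CS (Form.neg (Form.bot : Form Ag PVar PConst PropVar)) :=
    ptaut fun v hv => (hv.neg' _).2 hv.bot'
  let Γ : Set (Form Ag PVar PConst PropVar) := {B | Form.know B ∈ w} ∪
    ({B | ∃ t, B = Form.box (Form.ann t) ∧ Form.ann t ∈ w} ∪
     {B | ∃ t, B = Form.neg (Form.box (Form.ann t)) ∧ Form.ann t ∉ w})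
  have key : ∀ B, Der CS Γ B → ∃ A, ∃ ts ss : List (Pol PVar PConst), Form.know A ∈ w ∧
      (∀ t ∈ ts, Form.ann t ∈ w) ∧ (∀ t ∈ ss, Form.ann t ∉ w) ∧
      Proves CS (Form.imp (Form.know A) (Form.or
        (bigOr ((ts.map fun t => Form.neg (Form.box (Form.ann t))) ++
                (ss.map fun s => Form.box (Form.ann s)))) B)) := by
    intro B hB
    induction hB with
    | thm h =>
      refine ⟨_, [], [], hw.thm hT.nec, by simp, by simp, .mp (ptaut fun v hv => ?_) h⟩
      simp only [hv.imp', hv.or']; tauto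
    | hyp h =>
      rcases h with h | ⟨t, rfl, h⟩ | ⟨t, rfl, h⟩
      · rename_i A
        refine ⟨A, [], [], h, by simp, by simp,
          .mp (ptaut fun v hv => ?_) (Proves.ax (Ax.knowT (A := A)))⟩
        simp only [hv.imp', hv.or']; tauto
      · refine ⟨_, [t], [], hw.thm hT.nec, by simpa using h, by simp, ptaut fun v hv => ?_⟩
        simp only [hv.imp', hv.or', hv.bigOr']; simp [hv.neg']; tauto
      · refine ⟨_, [], [t], hw.thm hT.nec, by simp, by simpa using h, ptaut fun v hv => ?_⟩
        simp only [hv.imp', hv.or', hv.bigOr']; simp [hv.neg']; tauto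
    | @mp C D _ _ ih1 ih2 =>
      obtain ⟨A, ts, ss, hA, hts, hss, h1⟩ := ih1
      obtain ⟨A', ts', ss', hA', hts', hss', h2⟩ := ih2
      refine ⟨Form.and A A', ts ++ ts', ss ++ ss', ?_, ?_, ?_, ?_⟩
      · refine hw.mp (hw.ax .knowK (know_normal.mono hw (ptaut fun v hv => ?_) hA)) hA'
        simp only [hv.imp', hv.and']; tauto
      · intro t ht; rcases List.mem_append.1 ht with ht | ht
        exacts [hts t ht, hts' t ht]
      · intro t ht; rcases List.mem_append.1 ht with ht | ht
        exacts [hss t ht, hss' t ht]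
      · have e1 : Proves CS (Form.imp (Form.know (Form.and A A')) (Form.know A)) :=
          .mp (.ax .knowK) (.nec (ptaut fun v hv => by simp only [hv.imp', hv.and']; tauto))
        have e2 : Proves CS (Form.imp (Form.know (Form.and A A')) (Form.know A')) :=
          .mp (.ax .knowK) (.nec (ptaut fun v hv => by simp only [hv.imp', hv.and']; tauto))
        refine .mp (.mp (.mp (.mp (ptaut fun v hv => ?_) e1) e2) h1) h2
        simp only [hv.imp', hv.or', hv.bigOr']
        intro g1 g2 g3 g4 g5
        rcases g3 (g1 g5) with ⟨B, hB, hvB⟩ | g3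
        · refine Or.inl ⟨B, ?_, hvB⟩
          simp only [List.map_append, List.mem_append] at hB ⊢
          exact hB.imp Or.inl Or.inl
        · rcases g4 (g2 g5) with ⟨B, hB, hvB⟩ | g4
          · refine Or.inl ⟨B, ?_, hvB⟩
            simp only [List.map_append, List.mem_append] at hB ⊢
            exact hB.imp Or.inr Or.inr
          · exact Or.inr (g3 g4)
  have hnd : ¬ Der CS Γ (Form.bot : Form Ag PVar PConst PropVar) := by
    intro hd
    obtain ⟨A, ts, ss, hA, hts, hss, h⟩ := key _ hd
    obtain ⟨x⟩ := ‹Nonempty PVar›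
    obtain ⟨ts', ss', hne, h1, h2, hts', hss'⟩ : ∃ ts' ss' : List (Pol PVar PConst),
        ts' ++ ss' ≠ [] ∧ ts ⊆ ts' ∧ ss ⊆ ss' ∧ (∀ t ∈ ts', Form.ann t ∈ w) ∧
        (∀ t ∈ ss', Form.ann t ∉ w) := by
      by_cases hx : Form.ann (Pol.var x) ∈ w
      · refine ⟨Pol.var x :: ts, ss, by simp, List.subset_cons_self _ _, by simp, ?_, hss⟩
        intro t ht
        rcases List.mem_cons.1 ht with rfl | ht
        exacts [hx, hts t ht]
      · refine ⟨ts, Pol.var x :: ss, by simp, by simp, List.subset_cons_self _ _, hts, ?_⟩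
        intro t ht
        rcases List.mem_cons.1 ht with rfl | ht
        exacts [hx, hss t ht]
    have h3 : Proves CS (Form.imp (Form.know A) 
        (bigOr ((ts'.map fun t => Form.neg (Form.box (Form.ann t))) ++
                (ss'.map fun s => Form.box (Form.ann s))))) := by
      refine .mp (ptaut fun v hv => ?_) h
      simp only [hv.imp', hv.or', hv.bigOr']
      intro g1 g2
      rcases g1 g2 with ⟨B, hB, hvB⟩ | g3
      · refine ⟨B, ?_, hvB⟩
        rcases List.mem_append.1 hB with hB | hB
        · exact List.mem_append_left _ (List.map_subset _ h1 hB)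
        · exact List.mem_append_right _ (List.map_subset _ h2 hB)
      · exact (hv.bot' g3).elim
    have h4 := hw.mp (hw.thm (h3.rd hne)) hA
    obtain ⟨B, hB, hBw⟩ := (hw.isVal.bigOr' _).1 h4
    rcases List.mem_append.1 hB with hB | hB
    · obtain ⟨t, ht, rfl⟩ := List.mem_map.1 hB
      exact (hw.neg _).1 hBw (hts' t ht)
    · obtain ⟨t, ht, rfl⟩ := List.mem_map.1 hB
      exact hss' t ht hBw
  obtain ⟨u, hu, hs, _⟩ := lindenbaum hnd
  refine ⟨u, hu, fun A hA => hs (Or.inl (hw.ax .know4 hA)), fun t => ⟨fun h => ?_, fun h => ?_⟩⟩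
  · by_contra hc
    exact (hu.neg _).1 (hs (Or.inr (Or.inr ⟨t, rfl, hc⟩))) h
  · exact hs (Or.inr (Or.inl ⟨t, rfl, h⟩))

theorem cons_der {Γ : Set (Form Ag PVar PConst PropVar)} {A0} (_hA0 : A0 ∈ Γ) {B}
    (h : Der CS Γ B) : ∃ L : List (Form Ag PVar PConst PropVar), (∀ B ∈ L, B ∈ Γ) ∧
      Proves CS (Form.imp (andList A0 L) B) := by
  induction h with
  | thm h =>
    refine ⟨[], by simp, .mp (ptaut fun v hv => ?_) h⟩
    simp only [hv.imp']; tauto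
  | @hyp B h =>
    refine ⟨[B], by simpa using h, ptaut fun v hv => ?_⟩
    simp only [hv.imp', hv.andList']; simp
  | mp _ _ ih1 ih2 =>
    obtain ⟨L, hL, h1⟩ := ih1
    obtain ⟨L', hL', h2⟩ := ih2
    refine ⟨L ++ L', ?_, .mp (.mp (ptaut fun v hv => ?_) h1) h2⟩
    · intro B hB
      rcases List.mem_append.1 hB with hB | hB
      exacts [hL B hB, hL' B hB]
    · simp only [hv.imp', hv.andList', List.mem_append]
      intro g1 g2 g3
      exact g1 ⟨g3.1, fun B hB => g3.2 B (.inl hB)⟩ (g2 ⟨g3.1, fun B hB => g3.2 B (.inr hB)⟩)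

/-- The theory of the trivial model. -/
theorem exists_trivial (hCS : IsConstSpec CS) : ∃ w, IsMCS CS w ∧ ∀ t, Form.box (Form.ann t) ∉ w := by
  let M := unitModel Ag PVar PConst PropVar
  obtain ⟨h, hh⟩ := exists_hist M.toTemporalFrame ()
  refine ⟨{A | M.Sat A () h}, ⟨fun hA => ?_, fun h1 h2 => ?_, fun A => Iff.rfl⟩, fun t ht => ?_⟩
  · exact sound hCS M (fun m m1 => Or.inl fun hl => (hl.2 rfl).elim) (fun _ _ _ _ => trivial) hA () h hh
  · exact ((sat_isVal M () h).imp' _ _).1 h1 h2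
  · exact ht h hh

theorem exists_mcs (hCS : IsConstSpec CS) {Γ : Set (Form Ag PVar PConst PropVar)}
    (h : CSConsistent CS Γ) : ∃ w, IsMCS CS w ∧ Γ ⊆ w := by
  by_cases hne : ∃ A, A ∈ Γ
  · obtain ⟨A, hA⟩ := hne
    have : ¬ Der CS Γ (Form.bot : Form Ag PVar PConst PropVar) := by
      intro hd
      obtain ⟨L, hL, hp⟩ := cons_der hA hd
      exact h ⟨A, L, hA, hL, hp⟩
    obtain ⟨w, hw, hs, _⟩ := lindenbaum this
    exact ⟨w, hw, hs⟩
  · obtain ⟨w, hw, _⟩ := exists_trivial hCS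
    exact ⟨w, hw, fun A hA => (hne ⟨A, hA⟩).elim⟩

/-! The canonical model -/

/-- Worlds: maximal theories. -/
def Wd (CS : Set (Form Ag PVar PConst PropVar)) : Type :=
  {w : Set (Form Ag PVar PConst PropVar) // IsMCS CS w}

/-- Box-equivalence. -/
def BxEq (a b : Wd CS) : Prop := ∀ B, Form.box B ∈ a.1 ↔ Form.box B ∈ b.1

/-- Stit-equivalence. -/
def SEq (j : Ag) (a b : Wd CS) : Prop := ∀ B, Form.stit j B ∈ a.1 ↔ Form.stit j B ∈ b.1

/-- Epistemic accessibility. -/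
def KLe (a b : Wd CS) : Prop := ∀ B, Form.know B ∈ a.1 → Form.know B ∈ b.1

theorem BxEq.kle {a b : Wd CS} (h : BxEq a b) : KLe a b := fun _ hB => know_inv a.2 b.2 h hB

theorem KLe.ann {a b : Wd CS} (h : KLe a b) {t} (ht : Form.box (Form.ann t) ∈ a.1) :
    Form.box (Form.ann t) ∈ b.1 := b.2.ax .knowT (h _ (a.2.ax .a9 ht))

theorem KLe.prf {a b : Wd CS} (h : KLe a b) {t A} (ht : Form.proves t A ∈ a.1) :
    Form.proves t A ∈ b.1 := b.2.ax .knowT (h _ (proves_know a.2 ht))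

/-- One-step relation between entries (new entry first). -/
def Stp (b a : Wd CS × Wd CS) : Prop :=
  BxEq a.2 b.1 ∧ KLe b.1 b.2 ∧ ∀ t, Form.box (Form.ann t) ∈ b.2.1 ↔ Form.ann t ∈ b.1.1

theorem exists_stp [Nonempty PVar] (a : Wd CS × Wd CS) (v : Wd CS) (h : BxEq a.2 v) :
    ∃ u, Stp (v, u) a := by
  obtain ⟨u, hu, h1, h2⟩ := rd_succ v.2
  exact ⟨⟨u, hu⟩, h, h1, h2⟩

/-- Canonical moments. -/
def CMo (CS : Set (Form Ag PVar PConst PropVar)) : Type :=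
  {l : List (Wd CS × Wd CS) // l.IsChain Stp}

/-- The canonical temporal frame. -/
def cT (CS : Set (Form Ag PVar PConst PropVar)) : TemporalFrame (CMo CS) where
  le m m' := m.1 <:+ m'.1
  le_refl _ := List.suffix_rfl
  le_antisymm h h' := Subtype.ext (h.eq_of_length (le_antisymm h.length_le h'.length_le))
  le_trans h h' := h.trans h'
  nonempty := ⟨⟨[], List.isChain_nil⟩⟩
  hist_conn _ _ := ⟨⟨[], List.isChain_nil⟩, List.nil_suffix, List.nil_suffix⟩
  no_backward _ _ _ h h' := List.suffix_or_suffix_of_suffix h h'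

/-- `m'` is the child of `m` by the entry `a`. -/
def Chd (m : CMo CS) (a : Wd CS × Wd CS) (m' : CMo CS) : Prop := m'.1 = a :: m.1

theorem Chd.lt {m : CMo CS} {a m'} (h : Chd m a m') : (cT CS).lt m m' := by
  refine ⟨?_, fun e => ?_⟩
  · show m.1 <:+ m'.1
    rw [h]; exact List.suffix_cons _ _
  · subst e
    have := congrArg List.length h
    simp at this

theorem Chd.next {m : CMo CS} {a m'} (h : Chd m a m') : (cT CS).Next m m' := by
  refine ⟨h.lt, fun m'' hlt => ?_⟩
  have h1 : m''.1 <:+ m'.1 := hlt.1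
  rw [h, List.suffix_cons_iff] at h1
  rcases h1 with h1 | h1
  · exact (hlt.2 (Subtype.ext (h1.trans h.symm))).elim
  · exact h1

theorem exists_chd {m m1 : CMo CS} (h : (cT CS).lt m m1) :
    ∃ a m', Chd m a m' ∧ (cT CS).le m' m1 := by
  obtain ⟨p, hp⟩ := h.1
  rcases List.eq_nil_or_concat p with rfl | ⟨q, a, rfl⟩
  · exact (h.2 (Subtype.ext (by simpa using hp))).elim
  · have hs : (a :: m.1) <:+ m1.1 := ⟨q, by rw [← hp]; simp⟩
    exact ⟨a, ⟨a :: m.1, m1.2.suffix hs⟩, rfl, hs⟩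

theorem cT_mix : (cT CS).MixSucc := by
  intro m m1
  refine Or.inl fun h => ?_
  obtain ⟨a, m', hc, hle⟩ := exists_chd h
  exact ⟨m', hle, hc.next⟩

theorem chd_unique {m : CMo CS} {a b m1 m2} (h1 : Chd m a m1) (h2 : Chd m b m2)
    {h : Set (CMo CS)} (hh : (cT CS).IsHistory h) (hm1 : m1 ∈ h) (hm2 : m2 ∈ h) : a = b := by
  by_cases he : m1 = m2
  · subst he
    have := h1.symm.trans h2
    simp at this; exact this
  · have hlen : m1.1.length = m2.1.length := by rw [h1, h2]; simp
    rcases hh.1 hm1 hm2 he with h | h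
    · exact (he (Subtype.ext (List.IsSuffix.eq_of_length h hlen))).elim
    · exact (he (Subtype.ext (List.IsSuffix.eq_of_length h hlen.symm).symm)).elim

/-- Any chain-valid child entry gives a history. -/
theorem exists_hist_chd {m : CMo CS} {a m'} (h : Chd m a m') :
    ∃ g ∈ (cT CS).H m, m' ∈ g := by
  obtain ⟨g, hg⟩ := exists_hist (cT CS) m'
  exact ⟨g, hist_down' _ hg h.lt.1, hg.2⟩

theorem exists_next [Nonempty PVar] [hW : Nonempty (Wd CS)] (m : CMo CS) : ∃ a m', Chd m a m' := by
  obtain ⟨l, hl⟩ := m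
  cases l with
  | nil =>
    obtain ⟨w⟩ := hW
    exact ⟨(w, w), ⟨[(w, w)], List.isChain_singleton _⟩, rfl⟩
  | cons a l =>
    obtain ⟨u, hu⟩ := exists_stp a a.2 (fun _ => Iff.rfl)
    exact ⟨(a.2, u), ⟨(a.2, u) :: a :: l, List.isChain_cons_cons.2 ⟨hu, hl⟩⟩, rfl⟩

theorem hist_next [Nonempty PVar] [Nonempty (Wd CS)] {m : CMo CS} {h} (hh : h ∈ (cT CS).H m) :
    ∃ a, ∃ m' ∈ h, Chd m a m' := by
  by_cases hex : ∃ m1 ∈ h, (cT CS).lt m m1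
  · obtain ⟨m1, hm1, hlt⟩ := hex
    obtain ⟨a, m', hc, hle⟩ := exists_chd hlt
    exact ⟨a, m', hist_down _ ⟨hh.1, hm1⟩ hle, hc⟩
  · push Not at hex
    obtain ⟨a, m', hc⟩ := exists_next m
    have hch : IsChain (cT CS).le (insert m' h) := by
      refine hh.1.1.insert fun b hb _ => Or.inr ?_
      by_cases hbm : b = m
      · subst hbm; exact hc.lt.1
      · rcases hh.1.1 hb hh.2 hbm with h1 | h1
        · exact (cT CS).le_trans h1 hc.lt.1
        · exact (hex b hb ⟨h1, fun e => hbm e.symm⟩).elim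
    have := hh.1.2 _ hch (Set.subset_insert _ _)
    exact ⟨a, m', this ▸ Set.mem_insert _ _, hc⟩

open Classical in
/-- The entry chosen by history `h` at `m`. -/
noncomputable def nxt [Nonempty (Wd CS)] (m : CMo CS) (h : Set (CMo CS)) : Wd CS × Wd CS :=
  Classical.epsilon fun a => ∃ m' ∈ h, Chd m a m'

theorem nxt_spec [Nonempty PVar] [Nonempty (Wd CS)] {m : CMo CS} {h} (hh : h ∈ (cT CS).H m) :
    ∃ m' ∈ h, Chd m (nxt m h) m' := Classical.epsilon_spec (hist_next hh)

theorem nxt_eq [Nonempty PVar] [Nonempty (Wd CS)] {m : CMo CS} {h} (hh : h ∈ (cT CS).H m)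
    {a m'} (hm : m' ∈ h) (hc : Chd m a m') : nxt m h = a := by
  obtain ⟨m2, hm2, hc2⟩ := nxt_spec hh
  exact chd_unique hc2 hc hh.1 hm2 hm

theorem nxt_stp [Nonempty PVar] [Nonempty (Wd CS)] {m : CMo CS} {h} (hh : h ∈ (cT CS).H m)
    {a l} (hm : m.1 = a :: l) : Stp (nxt m h) a := by
  obtain ⟨m2, hm2, hc2⟩ := nxt_spec hh
  have := m2.2
  rw [hc2, hm, List.isChain_cons_cons] at this
  exact this.1

theorem nxt_undiv [Nonempty PVar] [Nonempty (Wd CS)] {m : CMo CS} {h h'}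
    (hh : h ∈ (cT CS).H m) (hh' : h' ∈ (cT CS).H m) (hu : (cT CS).Undiv m h h') :
    nxt m h = nxt m h' := by
  obtain ⟨m1, hlt, h1, h2⟩ := hu
  obtain ⟨a, m', hc, hle⟩ := exists_chd hlt
  rw [nxt_eq hh (hist_down _ ⟨hh.1, h1⟩ hle) hc, nxt_eq hh' (hist_down _ ⟨hh'.1, h2⟩ hle) hc]

/-- Realization of worlds by histories. -/
theorem realize [Nonempty PVar] [Nonempty (Wd CS)] {m : CMo CS} {a l} (hm : m.1 = a :: l)
    {v : Wd CS} (hv : BxEq a.2 v) : ∃ h ∈ (cT CS).H m, (nxt m h).1 = v := by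
  obtain ⟨u, hu⟩ := exists_stp a v hv
  have hch : ((v, u) :: m.1).IsChain Stp := by
    rw [hm, List.isChain_cons_cons, ← hm]; exact ⟨hu, m.2⟩
  have hc : Chd m (v, u) ⟨(v, u) :: m.1, hch⟩ := rfl
  obtain ⟨g, hg, hg'⟩ := exists_hist_chd hc
  exact ⟨g, hg, by rw [nxt_eq hg hg' hc]⟩

/-- Canonical epistemic relation. -/
def cR (m m' : CMo CS) : Prop :=
  ∀ a l, m.1 = a :: l → ∃ b l', m'.1 = b :: l' ∧ KLe a.2 b.2

theorem cR_refl (m : CMo CS) : cR m m := fun a l h => ⟨a, l, h, fun _ h => h⟩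

theorem cR_trans {m1 m2 m3 : CMo CS} (h : cR m1 m2) (h' : cR m2 m3) : cR m1 m3 := by
  intro a l e
  obtain ⟨b, l', e', hk⟩ := h a l e
  obtain ⟨c, l'', e'', hk'⟩ := h' b l' e'
  exact ⟨c, l'', e'', fun B hB => hk' B (hk B hB)⟩

theorem cR_of_le {m m' : CMo CS} (h : (cT CS).le m m') : cR m m' := by
  obtain ⟨p, hp⟩ := h
  obtain ⟨l', hl'⟩ := m'
  simp only at hp
  induction p generalizing l' with
  | nil =>
    have : m = ⟨l', hl'⟩ := Subtype.ext (by simpa using hp)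
    subst this; exact cR_refl _
  | cons b p ih =>
    subst hp
    have hch : (p ++ m.1).IsChain Stp := hl'.suffix (List.suffix_cons _ _)
    refine cR_trans (ih _ hch rfl) ?_
    intro a l e
    simp only at e
    refine ⟨b, p ++ m.1, rfl, ?_⟩
    have h2 : (b :: (p ++ m.1)).IsChain Stp := hl'
    rw [e, List.isChain_cons_cons] at h2
    exact fun B hB => h2.1.2.1 B (h2.1.1.kle B hB)

/-- Canonical `Act`. -/
noncomputable def cAct [Nonempty (Wd CS)] (m : CMo CS) (h : Set (CMo CS)) : Set (Pol PVar PConst) :=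
  {t | Form.box (Form.ann t) ∈ (nxt m h).2.1}

theorem cAct_iff [Nonempty PVar] [Nonempty (Wd CS)] {m : CMo CS} {h} (hh : h ∈ (cT CS).H m)
    {a l} (hm : m.1 = a :: l) (t) : t ∈ cAct m h ↔ Form.ann t ∈ (nxt m h).1.1 :=
  (nxt_stp hh hm).2.2 t

theorem cAct_all [Nonempty PVar] [Nonempty (Wd CS)] {m : CMo CS}
    {a l} (hm : m.1 = a :: l) (t) :
    (∀ h ∈ (cT CS).H m, t ∈ cAct m h) ↔ Form.box (Form.ann t) ∈ a.2.1 := by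
  constructor
  · intro h
    by_contra hc
    obtain ⟨u, hu, hb, hn⟩ := box_exist a.2.2 hc
    obtain ⟨g, hg, he⟩ := realize hm (v := ⟨u, hu⟩) hb
    have := (cAct_iff hg hm t).1 (h g hg)
    rw [he] at this
    exact hn this
  · intro h g hg
    rw [cAct_iff hg hm]
    have hs := (nxt_stp hg hm).1
    exact (nxt m g).1.2.ax .boxT ((hs _).1 h)

/-- Canonical choice relation. -/
def cRel [Nonempty (Wd CS)] (m : CMo CS) (j : Ag) (h h' : Set (CMo CS)) : Prop :=
  m.1 = [] ∨ SEq j (nxt m h).1 (nxt m h').1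

/-- The canonical model. -/
noncomputable def canon [Finite Ag] [Nonempty PVar] [Nonempty (Wd CS)]
    (h0 : ∃ w : Wd CS, ∀ t, Form.box (Form.ann t) ∉ w.1) :
    JstitModel (CMo CS) Ag PVar PConst PropVar where
  toTemporalFrame := cT CS
  choice m j := {C | ∃ h ∈ (cT CS).H m, C = {h' | h' ∈ (cT CS).H m ∧ cRel m j h h'}}
  choice_cell_nonempty := by
    rintro m j C ⟨h, hh, rfl⟩
    exact ⟨h, hh, Or.inr fun _ => Iff.rfl⟩
  choice_cell_sub := by
    rintro m j C ⟨h, hh, rfl⟩ h' hh'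
    exact hh'.1
  choice_cover := by
    intro m j h hh
    exact ⟨_, ⟨h, hh, rfl⟩, hh, Or.inr fun _ => Iff.rfl⟩
  choice_disjoint := by
    rintro m j C C' ⟨h, hh, rfl⟩ ⟨h', hh', rfl⟩ ⟨g, ⟨hg, h1⟩, ⟨_, h2⟩⟩
    ext x
    refine and_congr_right fun hx => ?_
    rcases h1 with h1 | h1
    · exact ⟨fun _ => Or.inl h1, fun _ => Or.inl h1⟩
    · rcases h2 with h2 | h2
      · exact ⟨fun _ => Or.inl h2, fun _ => Or.inl h2⟩
      · constructor
        · rintro (h3 | h3)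
          · exact Or.inl h3
          · exact Or.inr fun B => (h2 B).trans ((h1 B).symm.trans (h3 B))
        · rintro (h3 | h3)
          · exact Or.inl h3
          · exact Or.inr fun B => (h1 B).trans ((h2 B).symm.trans (h3 B))
  no_choice_undiv := by
    rintro m j h h' hh hh' hu C ⟨g, hg, rfl⟩ ⟨_, hr⟩
    refine ⟨hh', ?_⟩
    unfold cRel at hr ⊢
    rwa [← nxt_undiv hh hh' hu]
  independence := by
    intro m f hf
    choose g hg hfg using hf
    rcases hm : m.1 with _ | ⟨a, l⟩
    · obtain ⟨h, hh⟩ := exists_hist (cT CS) m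
      refine ⟨h, Set.mem_iInter.2 fun j => ?_⟩
      rw [hfg j]
      exact ⟨hh, Or.inl hm⟩
    · obtain ⟨v, hv, hvb, hvs⟩ := indep a.2.2 (fun j => (nxt m (g j)).1.1)
        (fun j => (nxt m (g j)).1.2) (fun j => (nxt_stp (hg j) hm).1)
      obtain ⟨h, hh, he⟩ := realize hm (v := ⟨v, hv⟩) hvb
      refine ⟨h, Set.mem_iInter.2 fun j => ?_⟩
      rw [hfg j]
      refine ⟨hh, Or.inr ?_⟩
      rw [he]; exact hvs j
  R := cR
  Re := cR
  R_refl := cR_refl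
  R_trans := cR_trans
  Re_refl := cR_refl
  Re_trans := cR_trans
  R_sub_Re h := h
  le_sub_R := cR_of_le
  act := cAct
  ev m t := {A | ∀ w : Wd CS, (∀ a l, m.1 = a :: l → KLe a.2 w) → Form.proves t A ∈ w.1}
  val p := {x | Form.pv p ∈ (nxt x.1 x.2).1.1}
  ev_mono := by
    intro m m' t hR A hA w hw
    refine hA w fun a l e => ?_
    obtain ⟨b, l', e', hk⟩ := hR a l e
    exact fun B hB => hw b l' e' B (hk B hB)
  ev_app := fun m s t A B h1 h2 w hw => w.2.mp (w.2.ax .a4 (h1 w hw)) (h2 w hw)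
  ev_sum_left := fun m s t A h1 w hw => w.2.ax .a6 ((w.2.isVal.or' _ _).2 (Or.inl (h1 w hw)))
  ev_sum_right := fun m s t A h1 w hw => w.2.ax .a6 ((w.2.isVal.or' _ _).2 (Or.inr (h1 w hw)))
  ev_bang := fun m t A h1 w hw => ((w.2.isVal.and' _ _).1 (w.2.ax .a5 (h1 w hw))).1
  expansion := by
    intro m m' h hlt hh t ht
    obtain ⟨a, m1, hc, hle⟩ := exists_chd hlt
    have hn := nxt_eq (hist_down' _ hh hlt.1) (hist_down _ hh hle) hc
    have ht' : Form.box (Form.ann t) ∈ (nxt m' h).2.1 := ht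
    rw [hn] at ht'
    obtain ⟨b, l', e', hk⟩ := cR_of_le hle a _ hc
    exact (cAct_all e' t).2 (hk.ann ht') h hh
  no_new := by
    intro m t hall
    obtain ⟨h, hh⟩ := exists_hist (cT CS) m
    rcases hm : m.1 with _ | ⟨a, l⟩
    · obtain ⟨w, hw⟩ := h0
      have hc : Chd m (w, w) ⟨[(w, w)], List.isChain_singleton _⟩ := by
        unfold Chd; rw [hm]
      obtain ⟨g, hg, hg'⟩ := exists_hist_chd hc
      have h1 : Form.box (Form.ann t) ∈ (nxt m g).2.1 := hall g hg
      rw [nxt_eq hg hg' hc] at h1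
      exact (hw t h1).elim
    · have hch : l.IsChain Stp := m.2.suffix (hm ▸ List.suffix_cons _ _)
      have hc : Chd ⟨l, hch⟩ a m := hm
      refine ⟨⟨l, hch⟩, h, hc.lt, hh, ?_⟩
      show Form.box (Form.ann t) ∈ (nxt _ h).2.1
      rw [nxt_eq (hist_down' _ hh hc.lt.1) hh.2 hc]
      exact (cAct_all hm t).1 hall
  divide := by
    intro m h h' hh hh' hu
    unfold cAct
    rw [nxt_undiv hh hh' hu]
  transparent := by
    intro m m' t hR hall h' hh'
    rcases hm : m.1 with _ | ⟨a, l⟩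
    · obtain ⟨w, hw⟩ := h0
      have hc : Chd m (w, w) ⟨[(w, w)], List.isChain_singleton _⟩ := by
        unfold Chd; rw [hm]
      obtain ⟨g, hg, hg'⟩ := exists_hist_chd hc
      have h1 : Form.box (Form.ann t) ∈ (nxt m g).2.1 := hall g hg
      rw [nxt_eq hg hg' hc] at h1
      exact (hw t h1).elim
    · obtain ⟨b, l', e', hk⟩ := hR a l hm
      exact (cAct_all e' t).2 (hk.ann ((cAct_all hm t).1 hall)) h' hh'

theorem truth [Finite Ag] [Nonempty PVar] [Nonempty (Wd CS)]
    (h0 : ∃ w : Wd CS, ∀ t, Form.box (Form.ann t) ∉ w.1) (A : Form Ag PVar PConst PropVar) :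
    ∀ (m : CMo CS) (h : Set (CMo CS)) (a : Wd CS × Wd CS) (l : List (Wd CS × Wd CS)),
      m.1 = a :: l → h ∈ (cT CS).H m →
      ((canon h0).Sat A m h ↔ A ∈ (nxt m h).1.1) := by
  induction A with
  | pv p => intro m h a l hm hh; exact Iff.rfl
  | and A B ihA ihB =>
    intro m h a l hm hh
    rw [JstitModel.Sat, ihA m h a l hm hh, ihB m h a l hm hh, (nxt m h).1.2.isVal.and']
  | neg A ih =>
    intro m h a l hm hh
    rw [JstitModel.Sat, ih m h a l hm hh, (nxt m h).1.2.neg]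
  | stit j A ih =>
    intro m h a l hm hh
    have hb := (nxt_stp hh hm).1
    constructor
    · intro hs
      by_contra hc
      obtain ⟨u, hu, hus, hn⟩ := stit_exist (nxt m h).1.2 hc
      obtain ⟨g, hg, he⟩ := realize hm (v := ⟨u, hu⟩)
        (fun B => (hb B).trans (stit_sub_box (nxt m h).1.2 hu hus B))
      have h1 := (ih m g a l hm hg).1 (hs g _ ⟨h, hh, rfl⟩ ⟨hh, Or.inr fun _ => Iff.rfl⟩
        ⟨hg, Or.inr (by rw [he]; exact hus)⟩)
      rw [he] at h1
      exact hn h1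
    · rintro hs g C ⟨h1, hh1, rfl⟩ ⟨_, hr⟩ ⟨hg, hr'⟩
      rw [ih m g a l hm hg]
      have r1 := hr.resolve_left (by rw [hm]; simp)
      have r2 := hr'.resolve_left (by rw [hm]; simp)
      exact (nxt m g).1.2.ax .stitT ((r2 _).1 ((r1 _).2 hs))
  | box A ih =>
    intro m h a l hm hh
    have hb := (nxt_stp hh hm).1
    constructor
    · intro hs
      by_contra hc
      obtain ⟨u, hu, hus, hn⟩ := box_exist (nxt m h).1.2 hc
      obtain ⟨g, hg, he⟩ := realize hm (v := ⟨u, hu⟩) (fun B => (hb B).trans (hus B))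
      have h1 := (ih m g a l hm hg).1 (hs g hg)
      rw [he] at h1
      exact hn h1
    · intro hs g hg
      rw [ih m g a l hm hg]
      exact (nxt m g).1.2.ax .boxT (((nxt_stp hg hm).1 _).1 ((hb _).2 hs))
  | know A ih =>
    intro m h a l hm hh
    have hb := (nxt_stp hh hm).1
    constructor
    · intro hs
      by_contra hc
      obtain ⟨u, hu, huk, hn⟩ := know_normal.exist (nxt m h).1.2 hc
      let U : Wd CS := ⟨u, hu⟩
      let m' : CMo CS := ⟨[(U, U)], List.isChain_singleton _⟩
      obtain ⟨g, hg, he⟩ := realize (m := m') rfl (v := U) (fun _ => Iff.rfl)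
      have h1 := (ih m' g _ _ rfl hg).1 (hs m' g (fun a' l' e => by
        rw [hm] at e; injection e with e1 e2; subst e1
        exact ⟨_, _, rfl, fun B hB => huk B (hb.kle B hB)⟩) hg)
      rw [he] at h1
      exact hn h1
    · intro hs m' g hR hg
      obtain ⟨b, l', e', hk⟩ := hR a l hm
      rw [ih m' g b l' e' hg]
      have hb' := (nxt_stp hg e').1
      have hs' : Form.know A ∈ a.2.1 := know_inv (nxt m h).1.2 a.2.2 (fun B => (hb B).symm) hs
      exact (nxt m' g).1.2.ax .knowT (hb'.kle _ (hk _ hs'))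
  | proves t A ih =>
    intro m h a l hm hh
    have hb := (nxt_stp hh hm).1
    constructor
    · rintro ⟨hs, _⟩
      refine hs (nxt m h).1 fun a' l' e => ?_
      rw [hm] at e; injection e with e1 e2; subst e1
      exact hb.kle
    · intro hs
      have hs' : Form.proves t A ∈ a.2.1 := BxEq.kle (fun B => (hb B).symm) |>.prf hs
      refine ⟨fun w hw => (hw a l hm).prf hs', fun m' g hR hg => ?_⟩
      obtain ⟨b, l', e', hk⟩ := hR a l hm
      rw [ih m' g b l' e' hg]
      have hb' := (nxt_stp hg e').1
      have h1 := hb'.kle.prf (hk.prf hs')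
      exact (nxt m' g).1.2.ax .knowT (((nxt m' g).1.2.isVal.and' _ _).1
        ((nxt m' g).1.2.ax .a5 h1)).2
  | ann t =>
    intro m h a l hm hh
    exact cAct_iff hh hm t

theorem completeness [Finite Ag] [Nonempty PVar] (hCS : IsConstSpec CS)
    {Γ : Set (Form Ag PVar PConst PropVar)} (hΓ : CSConsistent CS Γ) :
    ∃ (Mo : Type) (M : JstitModel Mo Ag PVar PConst PropVar),
        M.toTemporalFrame.MixSucc ∧ M.toJstitFrame.Unirelational ∧ CSNormal CS M ∧
        ∃ m h, h ∈ M.toTemporalFrame.H m ∧ ∀ A ∈ Γ, M.Sat A m h := by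
  obtain ⟨w, hw, hs⟩ := exists_mcs hCS hΓ
  obtain ⟨w0, hw0, ht0⟩ := exists_trivial hCS
  let U : Wd CS := ⟨w, hw⟩
  have : Nonempty (Wd CS) := ⟨U⟩
  have h0 : ∃ w : Wd CS, ∀ t, Form.box (Form.ann t) ∉ w.1 := ⟨⟨w0, hw0⟩, ht0⟩
  let m' : CMo CS := ⟨[(U, U)], List.isChain_singleton _⟩
  obtain ⟨g, hg, he⟩ := realize (m := m') rfl (v := U) (fun _ => Iff.rfl)
  refine ⟨CMo CS, canon h0, cT_mix, fun _ _ h => h, fun c m A hA u _ => u.2.thm (.rcs hA),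
    m', g, hg, fun A hA => ?_⟩
  rw [truth h0 A m' g _ _ rfl hg, he]
  exact hs hA

theorem consistency (hCS : IsConstSpec CS) {Γ : Set (Form Ag PVar PConst PropVar)}
    (hM : ∃ (Mo : Type) (M : JstitModel Mo Ag PVar PConst PropVar),
        M.toTemporalFrame.MixSucc ∧ CSNormal CS M ∧
        ∃ m h, h ∈ M.toTemporalFrame.H m ∧ ∀ A ∈ Γ, M.Sat A m h) : CSConsistent CS Γ := by
  rintro ⟨A, L, hA, hL, hp⟩
  obtain ⟨Mo, M, hmix, hN, m, h, hh, hs⟩ := hM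
  have hv := sat_isVal M m h
  exact hv.bot' ((hv.imp' _ _).1 (sound hCS M hmix hN hp m h hh)
    ((hv.andList' _ _).2 ⟨hs A hA, fun B hB => hs B (hL B hB)⟩))

end Helper

/-- Corollary 1: Γ is CS-consistent iff it is satisfiable in the class of
CS-normal jstit models based on mixed successor temporal frames for Ag, iff it is
satisfiable in the subclass of unirelational such models. (A model is based on a
temporal frame from the class iff its underlying temporal frame is a mixed successor
frame.) -/
theorem stmt8 {Ag PVar PConst PropVar : Type} [Finite Ag]
    [Countable PVar] [Infinite PVar] [Countable PConst] [Infinite PConst]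
    [Countable PropVar] [Infinite PropVar] [Inhabited PropVar]
    (CS : Set (Form Ag PVar PConst PropVar)) (hCS : IsConstSpec CS)
    (Γ : Set (Form Ag PVar PConst PropVar)) :
    (CSConsistent CS Γ ↔
      ∃ (Mo : Type) (M : JstitModel Mo Ag PVar PConst PropVar),
        M.toTemporalFrame.MixSucc ∧ CSNormal CS M ∧
        ∃ m h, h ∈ M.toTemporalFrame.H m ∧ ∀ A ∈ Γ, M.Sat A m h) ∧
    (CSConsistent CS Γ ↔
      ∃ (Mo : Type) (M : JstitModel Mo Ag PVar PConst PropVar),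
        M.toTemporalFrame.MixSucc ∧ M.toJstitFrame.Unirelational ∧ CSNormal CS M ∧
        ∃ m h, h ∈ M.toTemporalFrame.H m ∧ ∀ A ∈ Γ, M.Sat A m h) := by
  refine ⟨⟨fun h => ?_, consistency hCS⟩, ⟨completeness hCS, fun h => consistency hCS ?_⟩⟩
  · obtain ⟨Mo, M, h1, _, h2⟩ := completeness hCS h
    exact ⟨Mo, M, h1, h2⟩
  · obtain ⟨Mo, M, h1, _, h2⟩ := h
    exact ⟨Mo, M, h1, h2⟩
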